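/- Let Ω_n be the polynomial de Rham algebra of the n-simplex. The map Ω_n^{≤1} → ∏_{Hom_Δ([1],[n])} Ω_1, induced by the restriction maps Δ((ij))*: Ω_n^{≤1} → Ω_1 along all morphisms (ij): [1] → [n] with i ≤ j, is injective on the subspace of forms of degree at most one whose coefficients are polynomials of degree at most one. -/

import Mathlib

/-! We model the polynomial de Rham algebra `Ωₙ` (generated by `t₀,…,tₙ` of degree
`0` and `dt₀,…,dtₙ` of degree `1` subject to `Σtᵢ = 1` and `Σdtᵢ = 0`) in degrees
`≤ 1` and with coefficients of polynomial degree `≤ 1` concretely, over a field of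
characteristic zero: a degree-`0` element of coefficient degree `≤ 1` is an affine
function on the affine hyperplane `Δₙ = {t : Σ tᵢ = 1}`, and a `1`-form with
affine coefficients is an affine family, parametrized by `Δₙ`, of linear
functionals on the tangent space `Vₙ = {v : Σ vᵢ = 0}`.  Over an infinite field
this identification is faithful.  The morphism `(ij) : [1] → [n]` of `Δ`
(`0 ↦ i`, `1 ↦ j`, `i ≤ j`) induces `φ*(t_l) = Σ_{φ(m)=l} s_m`, i.e. the affine
map `Δ₁ → Δₙ`, `s ↦ s₀·eᵢ + s₁·eⱼ`, along which functions and forms are pulled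
back. -/

/-- The points of the affine hyperplane `{t : Fin (n+1) → k | Σ tᵢ = 1}`
(carrying the geometric `n`-simplex). -/
def SimplexPts (k : Type) [Field k] (n : ℕ) : Type :=
  {t : Fin (n + 1) → k // ∑ i, t i = 1}

/-- The sum-of-coordinates functional. -/
noncomputable def sumCoords (k : Type) [Field k] (n : ℕ) :
    (Fin (n + 1) → k) →ₗ[k] k :=
  ∑ i : Fin (n + 1), LinearMap.proj i

/-- The space `Vₙ` of tangent vectors to the hyperplane `Σ tᵢ = 1`
(equivalently, the span of the `dtᵢ`-dual directions): vectors with `Σ vᵢ = 0`. -/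
noncomputable def TangentVecs (k : Type) [Field k] (n : ℕ) :
    Submodule k (Fin (n + 1) → k) :=
  LinearMap.ker (sumCoords k n)

/-- `f` is (the restriction to the hyperplane of) an affine function, i.e. a
polynomial of degree `≤ 1` in `t₀,…,tₙ`. -/
def IsAffineFn {k : Type} [Field k] {n : ℕ} (f : SimplexPts k n → k) : Prop :=
  ∃ F : (Fin (n + 1) → k) →ᵃ[k] k, ∀ t : SimplexPts k n, f t = F t.1

/-- `ω` is a `1`-form with coefficients of polynomial degree `≤ 1`: an affine
family of linear functionals on the tangent space. -/
def IsAffineForm {k : Type} [Field k] {n : ℕ}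
    (ω : SimplexPts k n → (↥(TangentVecs k n) →ₗ[k] k)) : Prop :=
  ∃ W : (Fin (n + 1) → k) →ᵃ[k] (↥(TangentVecs k n) →ₗ[k] k),
    ∀ t : SimplexPts k n, ω t = W t.1

section Edge

variable {k : Type} [Field k] {n : ℕ}

/-- The affine map `Δ₁ → Δₙ` induced by the morphism `(ij) : [1] → [n]` of `Δ`:
`s ↦ s₀·eᵢ + s₁·eⱼ` (i.e. `φ*(t_l) = Σ_{φ(m)=l} s_m`). -/
def edgePt (i j : Fin (n + 1)) (s : SimplexPts k 1) : SimplexPts k n :=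
  ⟨fun l => (if l = i then s.1 0 else 0) + (if l = j then s.1 1 else 0), by
    have h2 := s.2
    rw [Fin.sum_univ_two] at h2
    simp [Finset.sum_add_distrib, Finset.sum_ite_eq', h2]⟩

/-- The linear part of `edgePt`, on ambient coordinate vectors. -/
def edgeLin₀ (i j : Fin (n + 1)) : (Fin 2 → k) →ₗ[k] (Fin (n + 1) → k) where
  toFun v := fun l => (if l = i then v 0 else 0) + (if l = j then v 1 else 0)
  map_add' v w := by
    funext l
    by_cases h1 : l = i <;> by_cases h2 : l = j <;>
      simp [h1, h2] <;> split_ifs <;> ring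
  map_smul' c v := by
    funext l
    by_cases h1 : l = i <;> by_cases h2 : l = j <;>
      simp [h1, h2, mul_add] <;> split_ifs <;> ring

/-- The differential of the edge map `Δ₁ → Δₙ`, on tangent vectors. -/
noncomputable def edgeLin (i j : Fin (n + 1)) :
    ↥(TangentVecs k 1) →ₗ[k] ↥(TangentVecs k n) :=
  LinearMap.restrict (edgeLin₀ i j)
    (p := TangentVecs k 1) (q := TangentVecs k n) (fun v hv => by
      have h0 : ∑ m : Fin 2, v m = 0 := by
        simpa [sumCoords, TangentVecs, LinearMap.sum_apply] using hv
      rw [Fin.sum_univ_two] at h0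
      show sumCoords k n _ = 0
      simp [sumCoords, LinearMap.sum_apply, edgeLin₀, Finset.sum_add_distrib,
        Finset.sum_ite_eq', h0])

/-- Pullback of a function along the edge `(ij) : [1] → [n]`. -/
def pullFn (i j : Fin (n + 1)) (f : SimplexPts k n → k) : SimplexPts k 1 → k :=
  fun s => f (edgePt i j s)

/-- Pullback of a `1`-form along the edge `(ij) : [1] → [n]`. -/
noncomputable def pullForm (i j : Fin (n + 1))
    (ω : SimplexPts k n → (↥(TangentVecs k n) →ₗ[k] k)) :
    SimplexPts k 1 → (↥(TangentVecs k 1) →ₗ[k] k) :=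
  fun s => (ω (edgePt i j s)).comp (edgeLin i j)

end Edge

/-! An affine map on the hyperplane `Σ tᵢ = 1` is determined by its values at the vertices `eᵢ`,
so it suffices to recover the value of a function or form at each `eᵢ` from its restrictions to the
edges. For a function, this value is that of the restriction along `(ii)`. For a form, the
restriction to the edge joining `eᵢ` and `eⱼ`, evaluated at the end `eᵢ`, gives the value at `eᵢ` on
`eⱼ - eᵢ`, and for fixed `i` these vectors span the tangent space. -/

section AffineSpanOfBasisVectors

variable {R ι : Type*} [Ring R] [Nontrivial R] [Fintype ι] [DecidableEq ι]

theorem mem_affineSpan_range_single_one {t : ι → R} (ht : ∑ i, t i = 1) :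
    t ∈ affineSpan R (Set.range fun i : ι => (Pi.single i 1 : ι → R)) := by
  have t_eq_affineCombination :
      Finset.univ.affineCombination R (fun i : ι => (Pi.single i 1 : ι → R)) t = t := by
    rw [Finset.univ.affineCombination_eq_linear_combination _ _ ht]
    exact (pi_eq_sum_univ' t).symm
  rw [← t_eq_affineCombination]
  exact affineCombination_mem_affineSpan ht _

theorem affineMap_apply_eq_of_single_one {V P : Type*} [AddCommGroup V] [Module R V]
    [AddTorsor V P] {A B : (ι → R) →ᵃ[R] P}
    (hAB : ∀ i, A (Pi.single i 1) = B (Pi.single i 1)) {t : ι → R} (ht : ∑ i, t i = 1) :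
    A t = B t :=
  AffineMap.eqOn_affineSpan (Set.forall_mem_range.2 hAB) (mem_affineSpan_range_single_one ht)

end AffineSpanOfBasisVectors

section Vertices

variable {k : Type} [Field k] {n : ℕ}

variable (k) in
/-- The vertex `eᵢ` of the simplex; affine functions and forms are determined by their values at
the vertices. -/
def vertexPt (i : Fin (n + 1)) : SimplexPts k n :=
  ⟨Pi.single i 1, by simp⟩

theorem IsAffineFn.ext_vertexPt {f g : SimplexPts k n → k} (hf : IsAffineFn f)
    (hg : IsAffineFn g) (hfg : ∀ i, f (vertexPt k i) = g (vertexPt k i)) : f = g := by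
  obtain ⟨F, hF⟩ := hf
  obtain ⟨G, hG⟩ := hg
  have hFG (i : Fin (n + 1)) : F (Pi.single i 1) = G (Pi.single i 1) :=
    (hF _).symm.trans ((hfg i).trans (hG _))
  funext t
  rw [hF, hG, affineMap_apply_eq_of_single_one hFG t.2]

theorem IsAffineForm.ext_vertexPt {ω η : SimplexPts k n → (TangentVecs k n →ₗ[k] k)}
    (hω : IsAffineForm ω) (hη : IsAffineForm η)
    (hωη : ∀ i, ω (vertexPt k i) = η (vertexPt k i)) : ω = η := by
  obtain ⟨W, hW⟩ := hω
  obtain ⟨H, hH⟩ := hη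
  have hWH (i : Fin (n + 1)) : W (Pi.single i 1) = H (Pi.single i 1) :=
    (hW _).symm.trans ((hωη i).trans (hH _))
  funext t
  rw [hW, hH, affineMap_apply_eq_of_single_one hWH t.2]

theorem edgePt_vertexPt_zero (i j : Fin (n + 1)) :
    edgePt i j (vertexPt k 0) = vertexPt k i :=
  Subtype.ext <| funext fun l => by simp [edgePt, vertexPt, Pi.single_apply]

theorem edgePt_vertexPt_one (i j : Fin (n + 1)) :
    edgePt i j (vertexPt k 1) = vertexPt k j :=
  Subtype.ext <| funext fun l => by simp [edgePt, vertexPt, Pi.single_apply]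

end Vertices

section EdgeVectors

variable {k : Type} [Field k] {n : ℕ}

theorem mem_tangentVecs_iff {v : Fin (n + 1) → k} : v ∈ TangentVecs k n ↔ ∑ i, v i = 0 := by
  simp [TangentVecs, sumCoords]

variable (k) in
/-- The tangent vector `eⱼ - eᵢ`, the direction of the edge from `eᵢ` to `eⱼ`, on which a `1`-form
is read off from its restriction to that edge. -/
def edgeVec (i j : Fin (n + 1)) : TangentVecs k n :=
  ⟨Pi.single j 1 - Pi.single i 1, mem_tangentVecs_iff.2 (by simp)⟩

theorem neg_edgeVec (i j : Fin (n + 1)) : -edgeVec k i j = edgeVec k j i :=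
  Subtype.ext (neg_sub _ _)

theorem edgeLin_edgeVec_zero_one (i j : Fin (n + 1)) :
    edgeLin i j (edgeVec k 0 1) = edgeVec k i j :=
  Subtype.ext <| funext fun l => by
    by_cases hl : l = i <;>
      simp [edgeLin, edgeLin₀, edgeVec, Pi.single_apply, LinearMap.restrict_apply, sub_eq_neg_add,
        hl]

theorem sum_smul_edgeVec (i : Fin (n + 1)) (v : TangentVecs k n) :
    ∑ j, v.1 j • edgeVec k i j = v := by
  have sum_eq_zero : ∑ j, v.1 j = 0 := mem_tangentVecs_iff.1 v.2
  apply Subtype.ext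
  simp only [edgeVec, Submodule.coe_sum, Submodule.coe_smul, smul_sub, Finset.sum_sub_distrib,
    ← Finset.sum_smul, sum_eq_zero, zero_smul, sub_zero]
  exact (pi_eq_sum_univ' v.1).symm

theorem span_range_edgeVec (i : Fin (n + 1)) :
    Submodule.span k (Set.range (edgeVec k i)) = ⊤ := by
  refine eq_top_iff.2 fun v _ => ?_
  rw [← sum_smul_edgeVec i v]
  exact Submodule.sum_mem _ fun j _ =>
    Submodule.smul_mem _ _ (Submodule.subset_span (Set.mem_range_self j))

end EdgeVectors

section Restriction

variable {k : Type} [Field k] {n : ℕ}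

theorem pullFn_vertexPt_zero (i j : Fin (n + 1)) (f : SimplexPts k n → k) :
    pullFn i j f (vertexPt k 0) = f (vertexPt k i) :=
  congrArg f (edgePt_vertexPt_zero i j)

theorem pullForm_vertexPt_zero_edgeVec (i j : Fin (n + 1))
    (ω : SimplexPts k n → (TangentVecs k n →ₗ[k] k)) :
    pullForm i j ω (vertexPt k 0) (edgeVec k 0 1) = ω (vertexPt k i) (edgeVec k i j) := by
  rw [pullForm, LinearMap.comp_apply, edgePt_vertexPt_zero, edgeLin_edgeVec_zero_one]

theorem pullForm_vertexPt_one_edgeVec (i j : Fin (n + 1))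
    (ω : SimplexPts k n → (TangentVecs k n →ₗ[k] k)) :
    pullForm i j ω (vertexPt k 1) (edgeVec k 0 1) = -ω (vertexPt k j) (edgeVec k j i) := by
  rw [pullForm, LinearMap.comp_apply, edgePt_vertexPt_one, edgeLin_edgeVec_zero_one, ← map_neg,
    neg_edgeVec]

theorem IsAffineFn.eq_of_pullFn_eq {f g : SimplexPts k n → k} (hf : IsAffineFn f)
    (hg : IsAffineFn g) (hfg : ∀ i, pullFn i i f = pullFn i i g) : f = g :=
  hf.ext_vertexPt hg fun i => by
    simpa only [pullFn_vertexPt_zero] using congrFun (hfg i) (vertexPt k 0)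

theorem apply_vertexPt_edgeVec_eq_of_pullForm_eq
    {ω η : SimplexPts k n → (TangentVecs k n →ₗ[k] k)}
    (hωη : ∀ i j, i ≤ j → pullForm i j ω = pullForm i j η) (i j : Fin (n + 1)) :
    ω (vertexPt k i) (edgeVec k i j) = η (vertexPt k i) (edgeVec k i j) := by
  rcases le_total i j with hij | hji
  · rw [← pullForm_vertexPt_zero_edgeVec, hωη i j hij, pullForm_vertexPt_zero_edgeVec]
  · rw [← neg_inj, ← pullForm_vertexPt_one_edgeVec, hωη j i hji, pullForm_vertexPt_one_edgeVec]

theorem IsAffineForm.eq_of_pullForm_eq {ω η : SimplexPts k n → (TangentVecs k n →ₗ[k] k)}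
    (hω : IsAffineForm ω) (hη : IsAffineForm η)
    (hωη : ∀ i j, i ≤ j → pullForm i j ω = pullForm i j η) : ω = η :=
  hω.ext_vertexPt hη fun i =>
    LinearMap.ext_on_range (span_range_edgeVec i) (apply_vertexPt_edgeVec_eq_of_pullForm_eq hωη i)

end Restriction

theorem restriction_of_forms_on_simplex_injective_general
    (k : Type) [Field k] (n : ℕ)
    (f g : SimplexPts k n → k)
    (ω η : SimplexPts k n → (↥(TangentVecs k n) →ₗ[k] k))
    (hf : IsAffineFn f) (hg : IsAffineFn g)
    (hω : IsAffineForm ω) (hη : IsAffineForm η)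
    (h : ∀ i j : Fin (n + 1), i ≤ j →
        pullFn i j f = pullFn i j g ∧ pullForm i j ω = pullForm i j η) :
    f = g ∧ ω = η :=
  ⟨hf.eq_of_pullFn_eq hg fun i => (h i i le_rfl).1,
    hω.eq_of_pullForm_eq hη fun i j hij => (h i j hij).2⟩

/-! ### Statement

**Lemma** ([BGNT, Lemma 2.19] “lemma: restriction of forms on simplex”).  The map
`Ωₙ^{≤1} → ∏_{Hom_Δ([1],[n])} Ω₁`, induced by the restriction maps
`Δ((ij))* : Ωₙ^{≤1} → Ω₁` along all morphisms `(ij) : [1] → [n]` with `i ≤ j`,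
is injective on the subspace of forms of degree at most one whose coefficients
are polynomials of degree at most one. -/
theorem restriction_of_forms_on_simplex_injective
    (k : Type) [Field k] [CharZero k] (n : ℕ)
    (f g : SimplexPts k n → k)
    (ω η : SimplexPts k n → (↥(TangentVecs k n) →ₗ[k] k))
    (hf : IsAffineFn f) (hg : IsAffineFn g)
    (hω : IsAffineForm ω) (hη : IsAffineForm η)
    (h : ∀ i j : Fin (n + 1), i ≤ j →
        pullFn i j f = pullFn i j g ∧ pullForm i j ω = pullForm i j η) :
    f = g ∧ ω = η := by
  exact restriction_of_forms_on_simplex_injective_general k n f g ω η hf hg hω hη h
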